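/- arXiv:2009.04997 — 4 statements merged into one kernel-verified Lean document; each statement's English description precedes it below -/
import Mathlib

section
/- If x and y are two distinct elements of the binary tetrahedral group T*₂₄ with ‖x − y‖ = 1 (that is, x and y are the endpoints of an edge of the regular 24-cell whose vertex set is T*₂₄), then x and y lie in different left cosets of Q₈ = {±1, ±i, ±j, ±k} in T*₂₄, i.e. x⁻¹·y ∉ Q₈. Hence the partition of T*₂₄ into the three cosets of Q₈ is a proper 3-colouring of the facet adjacency graph of the 24-cell. -/
/-- The imaginary unit `i` of the real quaternions. -/
def qi : Quaternion ℝ := ⟨0, 1, 0, 0⟩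
/-- The imaginary unit `j` of the real quaternions. -/
def qj : Quaternion ℝ := ⟨0, 0, 1, 0⟩
/-- The imaginary unit `k` of the real quaternions. -/
def qk : Quaternion ℝ := ⟨0, 0, 0, 1⟩

/-- The quaternion group `Q₈ = {±1, ±i, ±j, ±k}`. -/
def Q8 : Set (Quaternion ℝ) := {1, -1, qi, -qi, qj, -qj, qk, -qk}

/-- The binary tetrahedral group `T*₂₄` as a set of real quaternions. -/
def T24 : Set (Quaternion ℝ) :=
  Q8 ∪
    {x | ∃ e₀ e₁ e₂ e₃ : ℝ, (e₀ = 1 ∨ e₀ = -1) ∧ (e₁ = 1 ∨ e₁ = -1) ∧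
      (e₂ = 1 ∨ e₂ = -1) ∧ (e₃ = 1 ∨ e₃ = -1) ∧
      x = ((e₀ : Quaternion ℝ) + (e₁ : Quaternion ℝ) * qi + (e₂ : Quaternion ℝ) * qj +
        (e₃ : Quaternion ℝ) * qk) / 2}

open scoped Quaternion

theorem coords_qi : qi.re = 0 ∧ qi.imI = 1 ∧ qi.imJ = 0 ∧ qi.imK = 0 :=
  ⟨rfl, rfl, rfl, rfl⟩

theorem coords_qj : qj.re = 0 ∧ qj.imI = 0 ∧ qj.imJ = 1 ∧ qj.imK = 0 :=
  ⟨rfl, rfl, rfl, rfl⟩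

theorem coords_qk : qk.re = 0 ∧ qk.imI = 0 ∧ qk.imJ = 0 ∧ qk.imK = 1 :=
  ⟨rfl, rfl, rfl, rfl⟩

/-- Every element of `T24` has unit norm. -/
theorem norm_eq_one_of_mem_T24 {x : Quaternion ℝ} (hx : x ∈ T24) : ‖x‖ = 1 := by
  have hsq : Quaternion.normSq x = 1 := by
    rcases hx with hx | ⟨e₀, e₁, e₂, e₃, h₀, h₁, h₂, h₃, rfl⟩
    · rcases hx with rfl | rfl | rfl | rfl | rfl | rfl | rfl | rfl <;>
        simp [Quaternion.normSq_def', coords_qi, coords_qj, coords_qk]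
    · have htwo : Quaternion.normSq (2 : Quaternion ℝ) = 4 := by
        rw [← Nat.cast_ofNat, Quaternion.normSq_natCast]
        norm_num
      have hsquare : ∀ {e : ℝ}, e = 1 ∨ e = -1 → e ^ 2 = 1 := sq_eq_one_iff.mpr
      rw [map_div₀, htwo, Quaternion.normSq_def']
      simp [coords_qi, coords_qj, coords_qk, hsquare h₀, hsquare h₁, hsquare h₂, hsquare h₃]
      norm_num
  rw [Quaternion.normSq_eq_norm_mul_self] at hsq
  nlinarith [norm_nonneg x]

/-- No element of `Q8` is at distance one from the identity. -/
theorem norm_one_sub_ne_one_of_mem_Q8 {q : Quaternion ℝ} (hq : q ∈ Q8) : ‖1 - q‖ ≠ 1 := by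
  intro h
  have hsq : Quaternion.normSq (1 - q) = 1 := by
    rw [Quaternion.normSq_eq_norm_mul_self, h, one_mul]
  simp only [Quaternion.normSq_def', Quaternion.re_sub, Quaternion.imI_sub, Quaternion.imJ_sub,
    Quaternion.imK_sub] at hsq
  rcases hq with rfl | rfl | rfl | rfl | rfl | rfl | rfl | rfl <;>
    norm_num [coords_qi, coords_qj, coords_qk] at hsq

/-- If `x` and `y` are distinct elements of `T*₂₄` at Euclidean distance `1` (i.e. endpoints
of an edge of the regular 24-cell with vertex set `T*₂₄`), then they lie in different left
cosets of `Q₈` in `T*₂₄`: `x⁻¹ * y ∉ Q₈`.  Hence the three cosets of `Q₈` form a proper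
3-colouring of the facet adjacency graph of the 24-cell. -/
theorem adjacent_vertices_in_different_Q8_cosets :
    ∀ x ∈ T24, ∀ y ∈ T24, x ≠ y → ‖x - y‖ = 1 → x⁻¹ * y ∉ Q8 := by
  intro x hx y _ _ hxy hq
  have hnorm := norm_eq_one_of_mem_T24 hx
  have hx0 : x ≠ 0 := by
    rintro rfl
    simp at hnorm
  have hfactor : x - y = x * (1 - x⁻¹ * y) := by
    rw [mul_sub, mul_one, mul_inv_cancel_left₀ hx0]
  rw [hfactor, norm_mul, hnorm, one_mul] at hxy
  exact norm_one_sub_ne_one_of_mem_Q8 hq hxy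
end

section
/- Let c : T*₂₄ → {1, 2, 3} be any function such that c(x) ≠ c(y) whenever x, y ∈ T*₂₄ satisfy ‖x − y‖ = 1 (a proper 3-colouring of the edge graph of the 24-cell with vertex set T*₂₄). Then the three fibers of c are exactly the three left cosets of Q₈ = {±1, ±i, ±j, ±k} in T*₂₄. In other words, the 24-cell has a unique 3-colouring up to permutation of the colours. -/
open Quaternion

/-- The real quaternion with the given coordinates. -/
def quat (a b c d : ℝ) : ℍ[ℝ] := ⟨a, b, c, d⟩

@[simp] theorem re_quat (a b c d : ℝ) : (quat a b c d).re = a := rfl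
@[simp] theorem imI_quat (a b c d : ℝ) : (quat a b c d).imI = b := rfl
@[simp] theorem imJ_quat (a b c d : ℝ) : (quat a b c d).imJ = c := rfl
@[simp] theorem imK_quat (a b c d : ℝ) : (quat a b c d).imK = d := rfl

theorem qi_eq_quat : qi = quat 0 1 0 0 := rfl
theorem qj_eq_quat : qj = quat 0 0 1 0 := rfl
theorem qk_eq_quat : qk = quat 0 0 0 1 := rfl

/-- The Hurwitz quaternions, written in the `ℤ`-basis `(1 + i + j + k) / 2, i, j, k`. -/
def IsHurwitz (x : ℍ[ℝ]) : Prop :=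
  ∃ t n p q : ℤ, x = quat (t / 2) (t / 2 + n) (t / 2 + p) (t / 2 + q)

/-- A proper colouring of the edge graph of the 24-cell. -/
def IsProperColouring (c : ℍ[ℝ] → Fin 3) : Prop :=
  ∀ x ∈ T24, ∀ y ∈ T24, ‖x - y‖ = 1 → c x ≠ c y

theorem IsHurwitz.mul {x y : ℍ[ℝ]} (hx : IsHurwitz x) (hy : IsHurwitz y) :
    IsHurwitz (x * y) := by
  obtain ⟨t, n, p, q, rfl⟩ := hx
  obtain ⟨t', n', p', q', rfl⟩ := hy
  refine ⟨-t * t' - t * (n' + p' + q') - t' * (n + p + q) - 2 * (n * n' + p * p' + q * q'),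
    t * t' + t * (n' + q') + t' * (n + p) + (n * n' + p * p' + q * q') + (p * q' - q * p'),
    t * t' + t * (n' + p') + t' * (p + q) + (n * n' + p * p' + q * q') + (q * n' - n * q'),
    t * t' + t * (p' + q') + t' * (n + q) + (n * n' + p * p' + q * q') + (n * p' - p * n'), ?_⟩
  ext <;> simp <;> ring

theorem IsHurwitz.star {x : ℍ[ℝ]} (hx : IsHurwitz x) : IsHurwitz (star x) := by
  obtain ⟨t, n, p, q, rfl⟩ := hx
  refine ⟨t, -t - n, -t - p, -t - q, ?_⟩
  ext <;> simp <;> ring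

theorem Quaternion.norm_eq_one_iff (x : ℍ[ℝ]) :
    ‖x‖ = 1 ↔ x.re ^ 2 + x.imI ^ 2 + x.imJ ^ 2 + x.imK ^ 2 = 1 := by
  rw [← Quaternion.normSq_def', Quaternion.normSq_eq_norm_mul_self, ← sq,
    pow_eq_one_iff_of_nonneg (norm_nonneg x) two_ne_zero]

theorem norm_quat_eq_one_iff (a b c d : ℝ) :
    ‖quat a b c d‖ = 1 ↔ a ^ 2 + b ^ 2 + c ^ 2 + d ^ 2 = 1 :=
  Quaternion.norm_eq_one_iff _

theorem half_sum_eq_quat (a b c d : ℝ) :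
    ((a : ℍ[ℝ]) + (b : ℍ[ℝ]) * qi + (c : ℍ[ℝ]) * qj + (d : ℍ[ℝ]) * qk) / 2 =
      quat (a / 2) (b / 2) (c / 2) (d / 2) := by
  have h : (2 : ℍ[ℝ]) = ((2 : ℝ) : ℍ[ℝ]) := by norm_cast
  have h0 : ((2 : ℝ) : ℍ[ℝ]) ≠ 0 := Quaternion.coe_injective.ne two_ne_zero
  rw [h, div_eq_iff h0]
  ext <;> simp [qi_eq_quat, qj_eq_quat, qk_eq_quat]

theorem quat_half_mem_T24 {a b c d : ℝ} (ha : a = 1 ∨ a = -1) (hb : b = 1 ∨ b = -1)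
    (hc : c = 1 ∨ c = -1) (hd : d = 1 ∨ d = -1) :
    quat (a / 2) (b / 2) (c / 2) (d / 2) ∈ T24 :=
  Or.inr ⟨a, b, c, d, ha, hb, hc, hd, (half_sum_eq_quat a b c d).symm⟩

theorem isHurwitz_of_mem_T24 {x : ℍ[ℝ]} (hx : x ∈ T24) : IsHurwitz x := by
  rcases hx with hx | ⟨a, b, c, d, ha, hb, hc, hd, rfl⟩
  · rcases hx with rfl | rfl | rfl | rfl | rfl | rfl | rfl | rfl
    · exact ⟨2, -1, -1, -1, by ext <;> simp⟩
    · exact ⟨-2, 1, 1, 1, by ext <;> simp⟩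
    · exact ⟨0, 1, 0, 0, by ext <;> simp [qi_eq_quat]⟩
    · exact ⟨0, -1, 0, 0, by ext <;> simp [qi_eq_quat]⟩
    · exact ⟨0, 0, 1, 0, by ext <;> simp [qj_eq_quat]⟩
    · exact ⟨0, 0, -1, 0, by ext <;> simp [qj_eq_quat]⟩
    · exact ⟨0, 0, 0, 1, by ext <;> simp [qk_eq_quat]⟩
    · exact ⟨0, 0, 0, -1, by ext <;> simp [qk_eq_quat]⟩
  · have int_of_sign {e : ℝ} (he : e = 1 ∨ e = -1) : ∃ m : ℤ, e = 2 * m + 1 := by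
      rcases he with rfl | rfl
      · exact ⟨0, by norm_num⟩
      · exact ⟨-1, by norm_num⟩
    obtain ⟨a, rfl⟩ := int_of_sign ha
    obtain ⟨b, rfl⟩ := int_of_sign hb
    obtain ⟨c, rfl⟩ := int_of_sign hc
    obtain ⟨d, rfl⟩ := int_of_sign hd
    rw [half_sum_eq_quat]
    refine ⟨2 * a + 1, b - a, c - a, d - a, ?_⟩
    ext <;> simp <;> ring

theorem norm_of_mem_T24 {x : ℍ[ℝ]} (hx : x ∈ T24) : ‖x‖ = 1 := by
  rcases hx with hx | ⟨a, b, c, d, ha, hb, hc, hd, rfl⟩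
  · rw [Quaternion.norm_eq_one_iff]
    rcases hx with rfl | rfl | rfl | rfl | rfl | rfl | rfl | rfl <;> simp [qi_eq_quat, qj_eq_quat, qk_eq_quat]
  · rw [half_sum_eq_quat, norm_quat_eq_one_iff]
    linear_combination (sq_eq_one_iff.2 ha + sq_eq_one_iff.2 hb + sq_eq_one_iff.2 hc +
      sq_eq_one_iff.2 hd) / 4

/-- Integers `a, b, c, d` of equal parity with `a² + b² + c² + d² = 4` are all `±1`, or one of
them is `±2` and the others vanish. -/
theorem sum_four_sq_eq_four_cases {t n p q : ℤ}
    (h : t ^ 2 + (t + 2 * n) ^ 2 + (t + 2 * p) ^ 2 + (t + 2 * q) ^ 2 = 4) :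
    ((t = 1 ∨ t = -1) ∧ (t + 2 * n = 1 ∨ t + 2 * n = -1) ∧
      (t + 2 * p = 1 ∨ t + 2 * p = -1) ∧ (t + 2 * q = 1 ∨ t + 2 * q = -1)) ∨
    ((t = 2 ∨ t = -2) ∧ t + 2 * n = 0 ∧ t + 2 * p = 0 ∧ t + 2 * q = 0) ∨
    (t = 0 ∧ (n = 1 ∨ n = -1) ∧ p = 0 ∧ q = 0) ∨
    (t = 0 ∧ n = 0 ∧ (p = 1 ∨ p = -1) ∧ q = 0) ∨
    (t = 0 ∧ n = 0 ∧ p = 0 ∧ (q = 1 ∨ q = -1)) := by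
  have bound {a b : ℤ} (hb : 0 ≤ b) (hab : a ^ 2 + b = 4) : -2 ≤ a ∧ a ≤ 2 :=
    abs_le.1 (abs_le_of_sq_le_sq (by linarith) (by norm_num))
  obtain ⟨ht, ht'⟩ := bound (a := t)
    (b := (t + 2 * n) ^ 2 + (t + 2 * p) ^ 2 + (t + 2 * q) ^ 2) (by positivity) (by linarith)
  obtain ⟨hn, hn'⟩ := bound (a := t + 2 * n)
    (b := t ^ 2 + (t + 2 * p) ^ 2 + (t + 2 * q) ^ 2) (by positivity) (by linarith)
  obtain ⟨hp, hp'⟩ := bound (a := t + 2 * p)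
    (b := t ^ 2 + (t + 2 * n) ^ 2 + (t + 2 * q) ^ 2) (by positivity) (by linarith)
  obtain ⟨hq, hq'⟩ := bound (a := t + 2 * q)
    (b := t ^ 2 + (t + 2 * n) ^ 2 + (t + 2 * p) ^ 2) (by positivity) (by linarith)
  have hn2 : -2 ≤ n ∧ n ≤ 2 := by omega
  have hp2 : -2 ≤ p ∧ p ≤ 2 := by omega
  have hq2 : -2 ≤ q ∧ q ≤ 2 := by omega
  obtain ⟨hn2, hn2'⟩ := hn2
  obtain ⟨hp2, hp2'⟩ := hp2
  obtain ⟨hq2, hq2'⟩ := hq2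
  interval_cases t <;> interval_cases n <;> try omega
  all_goals interval_cases p <;> try omega
  all_goals interval_cases q <;> omega

theorem mem_T24_iff {x : ℍ[ℝ]} : x ∈ T24 ↔ IsHurwitz x ∧ ‖x‖ = 1 := by
  refine ⟨fun hx => ⟨isHurwitz_of_mem_T24 hx, norm_of_mem_T24 hx⟩, ?_⟩
  rintro ⟨⟨t, n, p, q, rfl⟩, hx⟩
  rw [norm_quat_eq_one_iff] at hx
  have h : t ^ 2 + (t + 2 * n) ^ 2 + (t + 2 * p) ^ 2 + (t + 2 * q) ^ 2 = 4 := by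
    have : (t ^ 2 + (t + 2 * n) ^ 2 + (t + 2 * p) ^ 2 + (t + 2 * q) ^ 2 : ℝ) = 4 := by
      linear_combination 4 * hx
    exact_mod_cast this
  rcases sum_four_sq_eq_four_cases h with ⟨ht, hn, hp, hq⟩ | h | h | h | h
  · have sign {m : ℤ} (hm : m = 1 ∨ m = -1) : (m : ℝ) = 1 ∨ (m : ℝ) = -1 := by
      exact_mod_cast hm
    convert quat_half_mem_T24 (sign ht) (sign hn) (sign hp) (sign hq) using 2 <;>
      push_cast <;> ring
  · obtain ⟨rfl | rfl, hn, hp, hq⟩ := h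
    · obtain rfl : n = -1 := by omega
      obtain rfl : p = -1 := by omega
      obtain rfl : q = -1 := by omega
      exact Or.inl (Or.inl (by ext <;> simp))
    · obtain rfl : n = 1 := by omega
      obtain rfl : p = 1 := by omega
      obtain rfl : q = 1 := by omega
      exact Or.inl (Or.inr (Or.inl (by ext <;> simp)))
  all_goals
    left
    simp only [Q8, Set.mem_insert_iff, Set.mem_singleton_iff]
  · obtain ⟨rfl, rfl | rfl, rfl, rfl⟩ := h <;> simp [Quaternion.ext_iff, qi_eq_quat, qj_eq_quat, qk_eq_quat]
  · obtain ⟨rfl, rfl, rfl | rfl, rfl⟩ := h <;> simp [Quaternion.ext_iff, qi_eq_quat, qj_eq_quat, qk_eq_quat]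
  · obtain ⟨rfl, rfl, rfl, rfl | rfl⟩ := h <;> simp [Quaternion.ext_iff, qi_eq_quat, qj_eq_quat, qk_eq_quat]

theorem mul_mem_T24 {x y : ℍ[ℝ]} (hx : x ∈ T24) (hy : y ∈ T24) : x * y ∈ T24 := by
  rw [mem_T24_iff] at *
  exact ⟨hx.1.mul hy.1, by rw [norm_mul, hx.2, hy.2, one_mul]⟩

theorem inv_mem_T24 {x : ℍ[ℝ]} (hx : x ∈ T24) : x⁻¹ ∈ T24 := by
  rw [mem_T24_iff] at *
  refine ⟨?_, by rw [norm_inv, hx.2, inv_one]⟩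
  have : x⁻¹ = star x := by
    rw [Quaternion.inv_def, Quaternion.normSq_eq_norm_mul_self, hx.2]
    simp
  rw [this]
  exact hx.1.star

theorem one_mem_T24 : (1 : ℍ[ℝ]) ∈ T24 := Or.inl (by simp [Q8])

/-- Left translation by an element of `T24` preserves proper colourings. -/
theorem IsProperColouring.comp_mul_left {c : ℍ[ℝ] → Fin 3} (hc : IsProperColouring c)
    {x : ℍ[ℝ]} (hx : x ∈ T24) : IsProperColouring fun g => c (x * g) := by
  intro a ha b hb hab
  refine hc _ (mul_mem_T24 hx ha) _ (mul_mem_T24 hx hb) ?_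
  rw [← mul_sub, norm_mul, norm_of_mem_T24 hx, hab, one_mul]

/-- Two vertices that both complete the edge `ab` to a triangle have the same colour. -/
theorem IsProperColouring.eq_of_triangles {c : ℍ[ℝ] → Fin 3} (hc : IsProperColouring c)
    {u v a b : ℍ[ℝ]} (hu : u ∈ T24) (hv : v ∈ T24) (ha : a ∈ T24) (hb : b ∈ T24)
    (hab : ‖a - b‖ = 1) (hua : ‖u - a‖ = 1) (hub : ‖u - b‖ = 1)
    (hva : ‖v - a‖ = 1) (hvb : ‖v - b‖ = 1) : c u = c v := by
  have := hc _ ha _ hb hab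
  have := hc _ hu _ ha hua
  have := hc _ hu _ hb hub
  have := hc _ hv _ ha hva
  have := hc _ hv _ hb hvb
  omega

theorem IsProperColouring.one_eq_of_mem {c : ℍ[ℝ] → Fin 3} (hc : IsProperColouring c)
    {u : ℍ[ℝ]} (hu : u ∈ ({qi, -qi, qj, -qj, qk, -qk} : Set ℍ[ℝ])) : c 1 = c u := by
  have hu' : u ∈ T24 := Or.inl (Or.inr (Or.inr hu))
  have key {a b d a' b' d' : ℝ} (ha : a = 1 ∨ a = -1) (hb : b = 1 ∨ b = -1)
      (hd : d = 1 ∨ d = -1) (ha' : a' = 1 ∨ a' = -1) (hb' : b' = 1 ∨ b' = -1)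
      (hd' : d' = 1 ∨ d' = -1) :=
    hc.eq_of_triangles one_mem_T24 hu' (quat_half_mem_T24 (Or.inl rfl) ha hb hd)
      (quat_half_mem_T24 (Or.inl rfl) ha' hb' hd')
  have pos : (1 : ℝ) = 1 ∨ (1 : ℝ) = -1 := Or.inl rfl
  have neg : (-1 : ℝ) = 1 ∨ (-1 : ℝ) = -1 := Or.inr rfl
  rcases hu with rfl | rfl | rfl | rfl | rfl | rfl
  · apply key pos pos pos pos pos neg <;> rw [Quaternion.norm_eq_one_iff] <;> norm_num [qi_eq_quat]
  · apply key neg pos pos neg pos neg <;> rw [Quaternion.norm_eq_one_iff] <;> norm_num [qi_eq_quat]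
  · apply key pos pos pos pos pos neg <;> rw [Quaternion.norm_eq_one_iff] <;> norm_num [qj_eq_quat]
  · apply key pos neg pos pos neg neg <;> rw [Quaternion.norm_eq_one_iff] <;> norm_num [qj_eq_quat]
  · apply key pos pos pos pos neg pos <;> rw [Quaternion.norm_eq_one_iff] <;> norm_num [qk_eq_quat]
  · apply key pos pos neg pos neg neg <;> rw [Quaternion.norm_eq_one_iff] <;> norm_num [qk_eq_quat]

theorem IsProperColouring.one_eq_neg_one {c : ℍ[ℝ] → Fin 3} (hc : IsProperColouring c) :
    c 1 = c (-1) := by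
  have hi : qi ∈ T24 := Or.inl (by simp [Q8])
  have hii : qi * qi = -1 := by ext <;> simp [qi_eq_quat]
  have h := (hc.comp_mul_left hi).one_eq_of_mem (u := qi) (by simp)
  simp only [mul_one, hii] at h
  rw [← h]
  exact hc.one_eq_of_mem (by simp)

theorem IsProperColouring.one_eq_iff {c : ℍ[ℝ] → Fin 3} (hc : IsProperColouring c)
    {g : ℍ[ℝ]} (hg : g ∈ T24) : c 1 = c g ↔ g ∈ Q8 := by
  constructor
  · intro h
    by_contra hQ
    obtain ⟨a, b, d, e, ha, hb, hd, he, rfl⟩ := hg.resolve_left hQ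
    rw [half_sum_eq_quat] at h hg
    have hsum := (norm_quat_eq_one_iff _ _ _ _).1 (norm_of_mem_T24 hg)
    rcases ha with rfl | rfl
    · refine hc _ one_mem_T24 _ hg ?_ h
      rw [Quaternion.norm_eq_one_iff]
      simp
      linear_combination hsum
    · refine hc (-1) (Or.inl (by simp [Q8])) _ hg ?_ (hc.one_eq_neg_one ▸ h)
      rw [Quaternion.norm_eq_one_iff]
      simp
      linear_combination hsum
  · rintro (rfl | rfl | h)
    · rfl
    · exact hc.one_eq_neg_one
    · exact hc.one_eq_of_mem h

/-- Uniqueness of the 3-colouring of the 24-cell: for any function `c` assigning one of three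
colours to the elements of `T*₂₄` such that vertices at distance `1` (i.e. joined by an edge
of the 24-cell) get distinct colours, two elements of `T*₂₄` have the same colour if and only
if they lie in the same left coset of `Q₈`.  Thus the fibers of `c` are exactly the three
left cosets of `Q₈` in `T*₂₄`, and the 3-colouring is unique up to permuting the colours. -/
theorem unique_three_colouring_of_24cell (c : Quaternion ℝ → Fin 3)
    (hc : ∀ x ∈ T24, ∀ y ∈ T24, ‖x - y‖ = 1 → c x ≠ c y) :
    ∀ x ∈ T24, ∀ y ∈ T24, (c x = c y ↔ x⁻¹ * y ∈ Q8) := by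
  intro x hx y hy
  have hproper : IsProperColouring c := hc
  have hx0 : x ≠ 0 := norm_ne_zero_iff.1 (by rw [norm_of_mem_T24 hx]; exact one_ne_zero)
  have h := (hproper.comp_mul_left hx).one_eq_iff (mul_mem_T24 (inv_mem_T24 hx) hy)
  simpa only [mul_one, mul_inv_cancel_left₀ hx0] using h
end

section
/- Let A be the 5×5 real matrix with rows (1/2, −1/2, 1/2, 1/2, 0), (1/2, 1/2, −1/2, 1/2, 0), (1/2, −1/2, −1/2, −1/2, 0), (1/2, 1/2, 1/2, −1/2, 0), (0, 0, 0, 0, 1), and let B be the 5×5 real matrix with rows (−7/2, 3/2, 3/2, 3/2, 3√2), (−3/2, 1/2, 1/2, −1/2, √2), (3/2, 1/2, −1/2, −1/2, −√2), (3/2, −1/2, 1/2, −1/2, −√2), (−3√2, √2, √2, √2, 5). Then A and B are invertible and satisfy the relation A⁻²·B⁻²·A·B⁻²·A⁻²·B = Id. Consequently there exists a group homomorphism Φ from the group G presented as ⟨a, b | a⁻²b⁻²ab⁻²a⁻²b⟩ to the group of invertible 5×5 real matrices with Φ(a) = A and Φ(b) = B. -/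
open Matrix

/-- The matrix `Φ(a)` of the holonomy representation of `π₁(m036)`. -/
noncomputable def Amat : Matrix (Fin 5) (Fin 5) ℝ :=
  !![1/2, -1/2, 1/2, 1/2, 0;
     1/2, 1/2, -1/2, 1/2, 0;
     1/2, -1/2, -1/2, -1/2, 0;
     1/2, 1/2, 1/2, -1/2, 0;
     0, 0, 0, 0, 1]

/-- The matrix `Φ(b)` of the holonomy representation of `π₁(m036)`. -/
noncomputable def Bmat : Matrix (Fin 5) (Fin 5) ℝ :=
  !![-7/2, 3/2, 3/2, 3/2, 3 * Real.sqrt 2;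
     -3/2, 1/2, 1/2, -1/2, Real.sqrt 2;
     3/2, 1/2, -1/2, -1/2, -Real.sqrt 2;
     3/2, -1/2, 1/2, -1/2, -Real.sqrt 2;
     -3 * Real.sqrt 2, Real.sqrt 2, Real.sqrt 2, Real.sqrt 2, 5]

/-- The relator `a⁻²b⁻²ab⁻²a⁻²b` of the presentation
`⟨a, b | a⁻²b⁻²ab⁻²a⁻²b⟩` of `π₁(m036)`, as an element of the free group on two
generators (`0` playing the role of `a` and `1` that of `b`). -/
def m036Relator : FreeGroup (Fin 2) :=
  (FreeGroup.of 0)⁻¹ ^ 2 * (FreeGroup.of 1)⁻¹ ^ 2 * FreeGroup.of 0 *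
    (FreeGroup.of 1)⁻¹ ^ 2 * (FreeGroup.of 0)⁻¹ ^ 2 * FreeGroup.of 1

/-- The group `G = ⟨a, b | a⁻²b⁻²ab⁻²a⁻²b⟩`, i.e. the fundamental group of the census
manifold `m036`. -/
def m036Group : Type := PresentedGroup ({m036Relator} : Set (FreeGroup (Fin 2)))

noncomputable instance : Group m036Group :=
  inferInstanceAs (Group (PresentedGroup ({m036Relator} : Set (FreeGroup (Fin 2)))))

/-- The inverse of `Amat`, which is its transpose. -/
noncomputable def AmatInv : Matrix (Fin 5) (Fin 5) ℝ :=
  !![1/2, 1/2, 1/2, 1/2, 0;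
     -1/2, 1/2, -1/2, 1/2, 0;
     1/2, -1/2, -1/2, 1/2, 0;
     1/2, 1/2, -1/2, -1/2, 0;
     0, 0, 0, 0, 1]

/-- The inverse of `Bmat`, which is its adjoint for the Lorentzian form
`diag(1, 1, 1, 1, -1)`. -/
noncomputable def BmatInv : Matrix (Fin 5) (Fin 5) ℝ :=
  !![-7/2, -3/2, 3/2, 3/2, 3 * Real.sqrt 2;
     3/2, 1/2, 1/2, -1/2, -Real.sqrt 2;
     3/2, 1/2, -1/2, 1/2, -Real.sqrt 2;
     3/2, -1/2, -1/2, -1/2, -Real.sqrt 2;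
     -3 * Real.sqrt 2, -Real.sqrt 2, Real.sqrt 2, Real.sqrt 2, 5]

theorem Amat_mul_AmatInv :
    Amat * AmatInv = 1 := by
  ext i j
  fin_cases i <;> fin_cases j <;>
    simp [Amat, AmatInv, Matrix.mul_apply, Fin.sum_univ_succ] <;> grind

theorem Bmat_mul_BmatInv :
    Bmat * BmatInv = 1 := by
  have hs : Real.sqrt 2 * Real.sqrt 2 = 2 := Real.mul_self_sqrt (by norm_num)
  ext i j
  fin_cases i <;> fin_cases j <;>
    simp [Bmat, BmatInv, Matrix.mul_apply, Fin.sum_univ_succ] <;> grind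

theorem AmatInv_sq :
    AmatInv ^ 2 =
    !![1/2, 1/2, -1/2, 1/2, 0;
       -1/2, 1/2, -1/2, -1/2, 0;
       1/2, 1/2, 1/2, -1/2, 0;
       -1/2, 1/2, 1/2, 1/2, 0;
       0, 0, 0, 0, 1] := by
  ext i j
  fin_cases i <;> fin_cases j <;>
    simp [pow_two, AmatInv, Matrix.mul_apply, Fin.sum_univ_succ] <;> grind

theorem BmatInv_sq :
    BmatInv ^ 2 =
    !![-7/2, -3/2, -3/2, 3/2, 3 * Real.sqrt 2;
       3/2, 1/2, 1/2, 1/2, -Real.sqrt 2;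
       3/2, -1/2, 1/2, -1/2, -Real.sqrt 2;
       -3/2, -1/2, 1/2, 1/2, Real.sqrt 2;
       -3 * Real.sqrt 2, -Real.sqrt 2, -Real.sqrt 2, Real.sqrt 2, 5] := by
  have hs : Real.sqrt 2 * Real.sqrt 2 = 2 := Real.mul_self_sqrt (by norm_num)
  ext i j
  fin_cases i <;> fin_cases j <;>
    simp [pow_two, BmatInv, Matrix.mul_apply, Fin.sum_univ_succ] <;> grind

theorem AmatInv_sq_mul_BmatInv_sq :
    AmatInv ^ 2 * BmatInv ^ 2 =
    !![-5/2, -1/2, -1/2, 3/2, 2 * Real.sqrt 2;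
       5/2, 3/2, 1/2, -1/2, -2 * Real.sqrt 2;
       1/2, -1/2, -1/2, 1/2, 0;
       5/2, 1/2, 3/2, -1/2, -2 * Real.sqrt 2;
       -3 * Real.sqrt 2, -Real.sqrt 2, -Real.sqrt 2, Real.sqrt 2, 5] := by
  have hs : Real.sqrt 2 * Real.sqrt 2 = 2 := Real.mul_self_sqrt (by norm_num)
  ext i j
  fin_cases i <;> fin_cases j <;>
    simp [AmatInv_sq, BmatInv_sq, Matrix.mul_apply, Fin.sum_univ_succ] <;> grind

theorem BmatInv_sq_mul_AmatInv_sq :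
    BmatInv ^ 2 * AmatInv ^ 2 =
    !![-5/2, -5/2, 5/2, 1/2, 3 * Real.sqrt 2;
       1/2, 3/2, -1/2, 1/2, -Real.sqrt 2;
       3/2, 1/2, -1/2, 1/2, -Real.sqrt 2;
       -1/2, -1/2, 3/2, -1/2, Real.sqrt 2;
       -2 * Real.sqrt 2, -2 * Real.sqrt 2, 2 * Real.sqrt 2, 0, 5] := by
  have hs : Real.sqrt 2 * Real.sqrt 2 = 2 := Real.mul_self_sqrt (by norm_num)
  ext i j
  fin_cases i <;> fin_cases j <;>
    simp [AmatInv_sq, BmatInv_sq, Matrix.mul_apply, Fin.sum_univ_succ] <;> grind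

theorem AmatInv_sq_mul_BmatInv_sq_mul_Amat :
    AmatInv ^ 2 * BmatInv ^ 2 * Amat =
    !![-1, 2, 0, -2, 2 * Real.sqrt 2;
       2, -1, 0, 2, -2 * Real.sqrt 2;
       0, 0, 1, 0, 0;
       2, -2, 0, 1, -2 * Real.sqrt 2;
       -2 * Real.sqrt 2, 2 * Real.sqrt 2, 0, -2 * Real.sqrt 2, 5] := by
  have hs : Real.sqrt 2 * Real.sqrt 2 = 2 := Real.mul_self_sqrt (by norm_num)
  ext i j
  fin_cases i <;> fin_cases j <;>
    simp [AmatInv_sq_mul_BmatInv_sq, Amat, Matrix.mul_apply, Fin.sum_univ_succ] <;> grind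

theorem BmatInv_sq_mul_AmatInv_sq_mul_Bmat :
    BmatInv ^ 2 * AmatInv ^ 2 * Bmat =
    !![-1, 2, 0, 2, 2 * Real.sqrt 2;
       2, -1, 0, -2, -2 * Real.sqrt 2;
       0, 0, 1, 0, 0;
       -2, 2, 0, 1, 2 * Real.sqrt 2;
       -2 * Real.sqrt 2, 2 * Real.sqrt 2, 0, 2 * Real.sqrt 2, 5] := by
  have hs : Real.sqrt 2 * Real.sqrt 2 = 2 := Real.mul_self_sqrt (by norm_num)
  ext i j
  fin_cases i <;> fin_cases j <;>
    simp [BmatInv_sq_mul_AmatInv_sq, Bmat, Matrix.mul_apply, Fin.sum_univ_succ] <;> grind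

/-- The relator evaluates to the identity on `Amat` and `Bmat`. -/
theorem relator_Amat_Bmat :
    AmatInv ^ 2 * BmatInv ^ 2 * Amat * BmatInv ^ 2 * AmatInv ^ 2 * Bmat = 1 := by
  rw [mul_assoc _ (BmatInv ^ 2) (AmatInv ^ 2), mul_assoc _ (BmatInv ^ 2 * AmatInv ^ 2) Bmat,
    AmatInv_sq_mul_BmatInv_sq_mul_Amat, BmatInv_sq_mul_AmatInv_sq_mul_Bmat]
  have hs : Real.sqrt 2 * Real.sqrt 2 = 2 := Real.mul_self_sqrt (by norm_num)
  ext i j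
  fin_cases i <;> fin_cases j <;>
    simp [Matrix.mul_apply, Fin.sum_univ_succ] <;> grind

/-- `Amat` as an invertible matrix. -/
noncomputable def AmatUnit : (Matrix (Fin 5) (Fin 5) ℝ)ˣ :=
  ⟨Amat, AmatInv, Amat_mul_AmatInv, mul_eq_one_comm.mp Amat_mul_AmatInv⟩

/-- `Bmat` as an invertible matrix. -/
noncomputable def BmatUnit : (Matrix (Fin 5) (Fin 5) ℝ)ˣ :=
  ⟨Bmat, BmatInv, Bmat_mul_BmatInv, mul_eq_one_comm.mp Bmat_mul_BmatInv⟩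

theorem lift_m036Relator :
    FreeGroup.lift ![AmatUnit, BmatUnit] m036Relator = 1 := by
  simp only [m036Relator, map_mul, map_pow, map_inv, FreeGroup.lift_apply_of]
  exact Units.ext relator_Amat_Bmat

/-- The matrices `A` and `B` are invertible and satisfy the relation
`A⁻²·B⁻²·A·B⁻²·A⁻²·B = Id`; consequently there is a group homomorphism `Φ` from the group
`⟨a, b | a⁻²b⁻²ab⁻²a⁻²b⟩` to the group of invertible `5 × 5` real matrices with
`Φ(a) = A` and `Φ(b) = B`. -/
theorem holonomy_representation_well_defined :
    IsUnit Amat ∧ IsUnit Bmat ∧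
    Amat⁻¹ ^ 2 * Bmat⁻¹ ^ 2 * Amat * Bmat⁻¹ ^ 2 * Amat⁻¹ ^ 2 * Bmat = 1 ∧
    ∃ Φ : m036Group →* (Matrix (Fin 5) (Fin 5) ℝ)ˣ,
      ((Φ (PresentedGroup.of 0) : (Matrix (Fin 5) (Fin 5) ℝ)ˣ) : Matrix (Fin 5) (Fin 5) ℝ)
          = Amat ∧
      ((Φ (PresentedGroup.of 1) : (Matrix (Fin 5) (Fin 5) ℝ)ˣ) : Matrix (Fin 5) (Fin 5) ℝ)
          = Bmat := by
  refine ⟨AmatUnit.isUnit, BmatUnit.isUnit, ?_, ?_⟩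
  · rw [Matrix.inv_eq_right_inv Amat_mul_AmatInv, Matrix.inv_eq_right_inv Bmat_mul_BmatInv]
    exact relator_Amat_Bmat
  · have hrel : ∀ r ∈ ({m036Relator} : Set (FreeGroup (Fin 2))),
        FreeGroup.lift ![AmatUnit, BmatUnit] r = 1 := by
      rintro r rfl
      exact lift_m036Relator
    refine ⟨PresentedGroup.toGroup hrel, ?_, ?_⟩
    · exact congrArg Units.val (PresentedGroup.toGroup.of hrel (x := 0))
    · exact congrArg Units.val (PresentedGroup.toGroup.of hrel (x := 1))
end

section
/- Let G be the group with presentation ⟨a, b | a⁻²b⁻²ab⁻²a⁻²b⟩. Then the generator a has infinite order in G: aⁿ ≠ 1 for every nonzero integer n. -/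
/-- The map `a ↦ 1`, `b ↦ -1` into `ℤ` kills the relator of `m036`. -/
theorem m036Relator_lift_eq_one :
    ∀ r ∈ ({m036Relator} : Set (FreeGroup (Fin 2))),
      FreeGroup.lift ![Multiplicative.ofAdd (1 : ℤ), Multiplicative.ofAdd (-1)] r = 1 := by
  rintro r rfl
  simp only [m036Relator, map_mul, map_pow, map_inv, FreeGroup.lift_apply_of]
  decide

/-- In the group `G = ⟨a, b | a⁻²b⁻²ab⁻²a⁻²b⟩` (the fundamental group of the census
manifold `m036`), the generator `a` has infinite order: `aⁿ ≠ 1` for every nonzero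
integer `n`. -/
theorem m036_generator_a_infinite_order :
    ∀ n : ℤ, n ≠ 0 →
      (PresentedGroup.of (0 : Fin 2) :
          PresentedGroup ({m036Relator} : Set (FreeGroup (Fin 2)))) ^ n ≠ 1 := by
  intro n hn h
  have h' := congrArg (PresentedGroup.toGroup m036Relator_lift_eq_one) h
  rw [map_zpow, PresentedGroup.toGroup.of, MonoidHom.map_one, Matrix.cons_val_zero, ← ofAdd_zsmul,
    ofAdd_eq_one] at h'
  exact hn (by simpa using h')
end
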